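/- arXiv:1205.6887 — 5 statements merged into one kernel-verified Lean document; each statement's English description precedes it below -/
import Mathlib

section
/- Let L > 0, R > 0, and let i be a positive integer. Define u : ℝ × ℝ → ℝ by u(z,r) = sin(iπz/L)·cosh(iπr/L), and set μ_i = L/(iπ·tanh(iπR/L)). Then: (1) u is harmonic, i.e. ∂²u/∂z²(z,r) + ∂²u/∂r²(z,r) = 0 for all (z,r); (2) u(0,r) = u(L,r) = 0 for all r; (3) ∂u/∂r(z,0) = 0 for all z; and (4) on the line r = R one has u(z,R) = μ_i·(∂u/∂r)(z,R) for all z. -/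
open Real

/-!
Put `k = iπ/L`. Separation of variables gives harmonicity, since `sin (k z)` and `cosh (k r)` are
eigenfunctions of the second derivative for the opposite eigenvalues `-k²` and `k²`. The inverse of
the added-mass eigenvalue is the logarithmic derivative `k tanh (kR)` of `cosh (k r)` at `r = R`.
-/

/-- The separated mode `sin (k z) cosh (k r)` of wave number `k`; the functions in
`added_mass_eigenfunctions` are those with `k = iπ/L`. -/
noncomputable def addedMassMode (k z r : ℝ) : ℝ :=
  sin (k * z) * cosh (k * r)

theorem deriv_deriv_comp_mul_left {𝕜 F : Type*} [NontriviallyNormedField 𝕜]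
    [NormedAddCommGroup F] [NormedSpace 𝕜 F] (c : 𝕜) (f : 𝕜 → F) (x : 𝕜) :
    deriv (deriv fun y => f (c * y)) x = c ^ 2 • deriv (deriv f) (c * x) := by
  have deriv_once : (deriv fun y => f (c * y)) = fun y => c • deriv f (c * y) :=
    funext (deriv_comp_mul_left c f)
  rw [deriv_once, deriv_fun_const_smul_field, deriv_comp_mul_left, smul_smul, sq]

theorem deriv_deriv_mul_add_deriv_deriv_mul_eq_zero {𝕜 : Type*} [NontriviallyNormedField 𝕜]
    {f g : 𝕜 → 𝕜} {z r a : 𝕜} (hf : deriv (deriv f) z = -(a * f z))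
    (hg : deriv (deriv g) r = a * g r) :
    deriv (deriv fun z' => f z' * g r) z + deriv (deriv fun r' => f z * g r') r = 0 := by
  rw [deriv_mul_const_field', deriv_mul_const_field, deriv_const_mul_field',
    deriv_const_mul_field, hf, hg]
  ring

namespace addedMassMode

theorem laplacian_eq_zero (k z r : ℝ) :
    deriv (deriv fun z' => addedMassMode k z' r) z + deriv (deriv (addedMassMode k z)) r = 0 := by
  have sin_eq : deriv (deriv fun z' => sin (k * z')) z = -(k ^ 2 * sin (k * z)) := by
    simp [deriv_deriv_comp_mul_left]
  have cosh_eq : deriv (deriv fun r' => cosh (k * r')) r = k ^ 2 * cosh (k * r) := by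
    simp [deriv_deriv_comp_mul_left]
  exact deriv_deriv_mul_add_deriv_deriv_mul_eq_zero sin_eq cosh_eq

theorem apply_zero_left (k r : ℝ) : addedMassMode k 0 r = 0 := by
  simp [addedMassMode]

theorem apply_eq_zero_of_mul_eq_int_mul_pi {k L : ℝ} {n : ℤ} (h : k * L = n * π) (r : ℝ) :
    addedMassMode k L r = 0 := by
  rw [addedMassMode, h, sin_int_mul_pi, zero_mul]

theorem deriv_right (k z r : ℝ) :
    deriv (addedMassMode k z) r = k * sin (k * z) * sinh (k * r) := by
  have cosh_deriv : deriv (fun r' => cosh (k * r')) r = k * sinh (k * r) := by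
    simp [deriv_comp_mul_left]
  change deriv (fun r' => sin (k * z) * cosh (k * r')) r = _
  rw [deriv_const_mul_field, cosh_deriv]
  ring

theorem eq_inv_mul_deriv_right {k R : ℝ} (hk : k ≠ 0) (hR : R ≠ 0) (z : ℝ) :
    addedMassMode k z R = (k * tanh (k * R))⁻¹ * deriv (addedMassMode k z) R := by
  have sinh_ne : sinh (k * R) ≠ 0 := sinh_ne_zero.2 (mul_ne_zero hk hR)
  have cosh_ne : cosh (k * R) ≠ 0 := (cosh_pos _).ne'
  rw [addedMassMode, deriv_right, tanh_eq_sinh_div_cosh]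
  field_simp

end addedMassMode

/-- The explicit eigenfunctions
`u(z,r) = sin(iπz/L)·cosh(iπr/L)` of the added-mass (Neumann-to-Dirichlet)
operator: `u` is harmonic, vanishes on the inlet/outlet boundaries
`z = 0` and `z = L`, has vanishing normal derivative on the bottom boundary
`r = 0`, and on the lateral boundary `r = R` satisfies
`u = μ_i · ∂u/∂r` with `μ_i = L/(iπ·tanh(iπR/L))`. -/
theorem added_mass_eigenfunctions
    (L R : ℝ) (hL : 0 < L) (hR : 0 < R) (i : ℕ) (hi : 0 < i)
    (u : ℝ → ℝ → ℝ)
    (hu : ∀ z r, u z r = Real.sin (i * π * z / L) * Real.cosh (i * π * r / L))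
    (μ : ℝ) (hμ : μ = L / (i * π * Real.tanh (i * π * R / L))) :
    (∀ z r, deriv (fun z' => deriv (fun z'' => u z'' r) z') z
        + deriv (fun r' => deriv (fun r'' => u z r'') r') r = 0)
    ∧ (∀ r, u 0 r = 0 ∧ u L r = 0)
    ∧ (∀ z, deriv (fun r => u z r) 0 = 0)
    ∧ (∀ z, u z R = μ * deriv (fun r => u z r) R) := by
  have hk : i * π / L ≠ 0 := by positivity
  have mul_L : i * π / L * L = (i : ℤ) * π := by simp [hL.ne']
  obtain rfl : u = addedMassMode (i * π / L) := by
    funext z r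
    rw [hu, addedMassMode, mul_div_right_comm, mul_div_right_comm _ r]
  have hμ_inv : μ = (i * π / L * tanh (i * π / L * R))⁻¹ := by
    rw [hμ, ← mul_div_right_comm _ R, div_mul_eq_mul_div, inv_div]
  refine ⟨addedMassMode.laplacian_eq_zero _, fun r => ⟨addedMassMode.apply_zero_left _ r, ?_⟩,
    fun z => ?_, fun z => ?_⟩
  · exact addedMassMode.apply_eq_zero_of_mul_eq_int_mul_pi mul_L r
  · simp [addedMassMode.deriv_right]
  · exact hμ_inv ▸ addedMassMode.eq_inv_mul_deriv_right hk hR.ne' z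
end

section
/- Let L > 0, R > 0, κ > 0, and let i be a positive integer. Define u : ℝ × ℝ → ℝ by u(z,r) = sin(iπz/L)·cosh(iπr/L), set μ_i = L/(iπ·tanh(iπR/L)) and λ_i = μ_i/(μ_i + κ). Then on the line r = R one has, for all z, u(z,R) = λ_i·( u(z,R) + κ·(∂u/∂r)(z,R) ). -/
open Real

/-!
On the lateral boundary a mode of wave number `k` satisfies `u = μ ∂u/∂r`, since
`cosh (k R) = μ k sinh (k R)`. Hence its Robin data `u + κ ∂u/∂r` equal `(μ + κ) ∂u/∂r`, and the
trace of the mode is `μ / (μ + κ)` times these data.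
-/

/-- The eigenvalue `μ` of the added-mass (Neumann-to-Dirichlet) operator at height `R` for radial
modes of wave number `k`, that is, profiles proportional to `cosh (k r)`; the paper's `μ_i` is the
case `k = iπ/L`. At `k = 0` or `R = 0` it takes the junk value `0`. -/
noncomputable def addedMassEigenvalue (k R : ℝ) : ℝ :=
  1 / (k * tanh (k * R))

theorem addedMassEigenvalue_div (a L R : ℝ) :
    addedMassEigenvalue (a / L) R = L / (a * tanh (a * R / L)) := by
  rw [addedMassEigenvalue, ← mul_div_right_comm, div_mul_eq_mul_div, one_div_div]

theorem addedMassEigenvalue_mul_sinh {k R : ℝ} (hk : k ≠ 0) (hR : R ≠ 0) :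
    addedMassEigenvalue k R * (k * sinh (k * R)) = cosh (k * R) := by
  have h_sinh : sinh (k * R) ≠ 0 := sinh_ne_zero.mpr (mul_ne_zero hk hR)
  rw [addedMassEigenvalue, tanh_eq_sinh_div_cosh]
  field_simp

theorem addedMassEigenvalue_pos {k R : ℝ} (hk : k ≠ 0) (hR : 0 < R) :
    0 < addedMassEigenvalue k R := by
  have h_sinh : 0 < k * sinh (k * R) := by
    rcases hk.lt_or_gt with hk | hk
    · exact mul_pos_of_neg_of_neg hk (sinh_neg_iff.mpr (mul_neg_of_neg_of_pos hk hR))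
    · exact mul_pos hk (sinh_pos_iff.mpr (mul_pos hk hR))
  have h_cosh : 0 < addedMassEigenvalue k R * (k * sinh (k * R)) := by
    rw [addedMassEigenvalue_mul_sinh hk hR.ne']
    exact cosh_pos _
  exact (pos_iff_pos_of_mul_pos h_cosh).mpr h_sinh

theorem deriv_const_mul_cosh_mul (c k r : ℝ) :
    deriv (fun s => c * cosh (k * s)) r = c * (k * sinh (k * r)) := by
  rw [deriv_const_mul_field, deriv_comp_mul_left, Real.deriv_cosh, smul_eq_mul]

theorem eq_div_add_mul_of_eq_mul {F : Type*} [Field F] {p q μ κ : F}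
    (hpq : p = μ * q) (hμκ : μ + κ ≠ 0) :
    p = μ / (μ + κ) * (p + κ * q) := by
  subst hpq
  field_simp

theorem robin_to_dirichlet_eigenfunctions_general {α : Type*} {k R κ : ℝ} (hk : k ≠ 0) (hR : R ≠ 0)
    (hμκ : addedMassEigenvalue k R + κ ≠ 0) (f : α → ℝ) (u : α → ℝ → ℝ)
    (hu : ∀ z r, u z r = f z * cosh (k * r)) (z : α) :
    u z R = addedMassEigenvalue k R / (addedMassEigenvalue k R + κ) *
      (u z R + κ * deriv (fun r => u z r) R) := by
  have h_trace : u z R = addedMassEigenvalue k R * deriv (fun r => u z r) R := by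
    simp only [hu, deriv_const_mul_cosh_mul]
    rw [mul_left_comm, addedMassEigenvalue_mul_sinh hk hR]
  exact eq_div_add_mul_of_eq_mul h_trace hμκ

/-- The functions `u(z,r) = sin(iπz/L)·cosh(iπr/L)` are
eigenfunctions of the Robin-to-Dirichlet operator `S` of the kinematically
coupled β-scheme: on the lateral boundary `r = R` one has
`u(z,R) = λ_i·(u(z,R) + κ·∂u/∂r(z,R))`, where
`μ_i = L/(iπ·tanh(iπR/L))` and `λ_i = μ_i/(μ_i + κ)`. -/
theorem robin_to_dirichlet_eigenfunctions
    (L R κ : ℝ) (hL : 0 < L) (hR : 0 < R) (hκ : 0 < κ)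
    (i : ℕ) (hi : 0 < i)
    (u : ℝ → ℝ → ℝ)
    (hu : ∀ z r, u z r = Real.sin (i * π * z / L) * Real.cosh (i * π * r / L))
    (μ : ℝ) (hμ : μ = L / (i * π * Real.tanh (i * π * R / L)))
    (lam : ℝ) (hlam : lam = μ / (μ + κ)) :
    ∀ z, u z R = lam * (u z R + κ * deriv (fun r => u z r) R) := by
  rw [hlam, hμ, ← addedMassEigenvalue_div]
  have hk : (i * π / L : ℝ) ≠ 0 := by positivity
  exact robin_to_dirichlet_eigenfunctions_general hk hR.ne'
    (add_pos (addedMassEigenvalue_pos hk hR) hκ).ne' _ u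
    fun z r => by rw [hu, mul_div_right_comm _ r L]
end

section
/- Let κ > 0, μ > 0, and β ∈ [0,1], and set λ = μ/(μ + κ). Then 0 ≤ βλ < 1. Moreover, for every M ≥ 0, every real sequence (a_n)_{n≥1} with |a_n| ≤ M for all n, and every p_0 ∈ ℝ, the sequence defined by p_{n+1} = a_{n+1} + βλ·p_n satisfies |β·p_n| ≤ β·( M/(1 − βλ) + |p_0| ) for every n ≥ 0. In particular the structure loading β·p_n in the kinematically coupled β-scheme is uniformly bounded for every value of κ = ρ_s h/ρ_f > 0, i.e. the scheme does not suffer from the added-mass effect and is unconditionally stable for all 0 ≤ β ≤ 1. -/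
/-!
The added-mass factor `μ / (μ + κ)` lies in `[0, 1)` for every `κ > 0`, so one step of the scheme
shrinks norms by the factor `r = β μ / (μ + κ) < 1`, up to the pressure data, which are bounded
by `M`. The norms therefore satisfy `u (n + 1) ≤ M + r * u n`. Measured from the fixed point
`M / (1 - r)` of `x ↦ M + r * x`, they are dominated by a geometric sequence of ratio `r`.
-/

theorem le_div_one_sub_add_pow_mul {r M : ℝ} {u : ℕ → ℝ} (hr₀ : 0 ≤ r) (hr₁ : r ≠ 1)
    (hu : ∀ n, u (n + 1) ≤ M + r * u n) (n : ℕ) :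
    u n ≤ M / (1 - r) + r ^ n * (u 0 - M / (1 - r)) := by
  have fixed_point : M / (1 - r) = M + r * (M / (1 - r)) := by
    have : 1 - r ≠ 0 := sub_ne_zero.mpr hr₁.symm
    field_simp
    ring
  have geometric : u n - M / (1 - r) ≤ r ^ n * (u 0 - M / (1 - r)) :=
    le_geom (u := fun k ↦ u k - M / (1 - r)) hr₀ n fun k _ ↦ by linarith [hu k]
  linarith

theorem norm_le_div_one_sub_add_norm_zero {E : Type*} [SeminormedAddGroup E] {T : E → E} {r M : ℝ}
    (hr : r ∈ Set.Ico (0 : ℝ) 1) (hT : ∀ x, ‖T x‖ ≤ r * ‖x‖) {f p : ℕ → E}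
    (hf : ∀ n, ‖f n‖ ≤ M) (hp : ∀ n, p (n + 1) = f n + T (p n)) (n : ℕ) :
    ‖p n‖ ≤ M / (1 - r) + ‖p 0‖ := by
  have step (k : ℕ) : ‖p (k + 1)‖ ≤ M + r * ‖p k‖ :=
    hp k ▸ norm_add_le_of_le (hf k) (hT (p k))
  have fixed_point_nonneg : 0 ≤ M / (1 - r) :=
    div_nonneg ((norm_nonneg _).trans (hf 0)) (sub_nonneg.mpr hr.2.le)
  calc
    ‖p n‖ ≤ M / (1 - r) + r ^ n * (‖p 0‖ - M / (1 - r)) :=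
      le_div_one_sub_add_pow_mul (u := fun k ↦ ‖p k‖) hr.1 hr.2.ne step n
    _ ≤ M / (1 - r) + r ^ n * ‖p 0‖ := by
      have := pow_nonneg hr.1 n
      gcongr
      exact sub_le_self _ fixed_point_nonneg
    _ ≤ M / (1 - r) + ‖p 0‖ := by
      gcongr
      exact mul_le_of_le_one_left (norm_nonneg _) (pow_le_one₀ hr.1 hr.2.le)

theorem mul_div_add_mem_Ico {K : Type*} [Field K] [LinearOrder K] [IsStrictOrderedRing K]
    {κ μ β : K} (hκ : 0 < κ) (hμ : 0 ≤ μ) (hβ : β ∈ Set.Icc (0 : K) 1) :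
    β * (μ / (μ + κ)) ∈ Set.Ico (0 : K) 1 := by
  have nonneg : 0 ≤ μ / (μ + κ) := by positivity
  have lt_one : μ / (μ + κ) < 1 := (div_lt_one (by positivity)).mpr (lt_add_of_pos_right μ hκ)
  exact ⟨mul_nonneg hβ.1 nonneg, (mul_le_of_le_one_left nonneg hβ.2).trans_lt lt_one⟩

/-- Here `S` acts on a whole space of pressure traces. As `x ↦ x / (x + κ)` is increasing, `hS`
holds for the operator of the scheme when `μ` bounds the spectrum of the self-adjoint nonnegative
added-mass operator. -/
theorem kinematically_coupled_beta_scheme_stable_general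
    {E : Type*} [SeminormedAddCommGroup E] [NormedSpace ℝ E] {κ μ β M : ℝ} (hκ : 0 < κ)
    (hμ : 0 ≤ μ) (hβ : β ∈ Set.Icc (0 : ℝ) 1) {S : E → E}
    (hS : ∀ x, ‖S x‖ ≤ μ / (μ + κ) * ‖x‖) {a p : ℕ → E} (ha : ∀ n, 1 ≤ n → ‖a n‖ ≤ M)
    (hp : ∀ n, p (n + 1) = a (n + 1) + β • S (p n)) (n : ℕ) :
    ‖β • p n‖ ≤ β * (M / (1 - β * (μ / (μ + κ))) + ‖p 0‖) := by
  have contraction (x : E) : ‖β • S x‖ ≤ β * (μ / (μ + κ)) * ‖x‖ := by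
    rw [norm_smul_of_nonneg hβ.1, mul_assoc]
    exact mul_le_mul_of_nonneg_left (hS x) hβ.1
  rw [norm_smul_of_nonneg hβ.1]
  exact mul_le_mul_of_nonneg_left (norm_le_div_one_sub_add_norm_zero
    (mul_div_add_mem_Ico hκ hμ hβ) contraction (fun k ↦ ha (k + 1) k.succ_pos) hp n) hβ.1

/-- Unconditional stability of the kinematically coupled
β-scheme (eigenmode form). For `κ = ρ_s h/ρ_f > 0`, any added-mass
eigenvalue `μ > 0`, any `β ∈ [0,1]`, and `λ = μ/(μ + κ)`, one has
`0 ≤ βλ < 1`; and for any uniformly bounded external pressure data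
(`|a_n| ≤ M`), the pressure iteration `p_{n+1} = a_{n+1} + βλ·p_n`
produces a structure loading `β·p_n` that is uniformly bounded,
for every value of `κ`: no added-mass effect. -/
theorem kinematically_coupled_beta_scheme_stable
    (κ μ β : ℝ) (hκ : 0 < κ) (hμ : 0 < μ) (hβ : β ∈ Set.Icc (0 : ℝ) 1)
    (lam : ℝ) (hlam : lam = μ / (μ + κ)) :
    (0 ≤ β * lam ∧ β * lam < 1)
    ∧ ∀ M : ℝ, 0 ≤ M → ∀ a : ℕ → ℝ, (∀ n : ℕ, 1 ≤ n → |a n| ≤ M) →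
        ∀ p : ℕ → ℝ, (∀ n : ℕ, p (n + 1) = a (n + 1) + β * lam * p n) →
          ∀ n : ℕ, |β * p n| ≤ β * (M / (1 - β * lam) + |p 0|) := by
  subst hlam
  refine ⟨mul_div_add_mem_Ico hκ hμ.le hβ, fun M _ a ha p hp ↦ ?_⟩
  exact kinematically_coupled_beta_scheme_stable_general (S := (μ / (μ + κ) * ·)) hκ hμ.le hβ
    (fun x ↦ (norm_smul_of_nonneg (by positivity) x).le) ha
    (by simpa only [smul_eq_mul, mul_assoc] using hp)
end

section
/- Let ρ > 0, c > 0 and Δt > 0. Every real sequence (η_n)_{n≥0} satisfying (ρ + Δt²c)·η_{n+1} − 2ρ·η_n + ρ·η_{n−1} = 0 for all n ≥ 1 converges to 0. In particular, the implicit marching scheme for the structure equation is unconditionally stable: no restriction relating Δt, ρ and c is needed. -/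
open Filter

/-! Divided by its leading coefficient, the scheme reads `η_{n+2} = p η_{n+1} - q η_n` with
`q = ρ / (ρ + Δt²c) ∈ (0, 1)` and `p = 2q`. Its solutions are combinations of shifts of the Lucas
sequence `U_n`, and the quadratic form `y² - p y x + q x²` is multiplied by exactly `q` at each step
of the recurrence. Since `p² < 4q`, this form is positive definite, so `U_n²` is at most a constant
times `q ^ n`. -/

section LucasSequence

variable {R : Type*} [CommRing R]

/-- The Lucas sequence of the first kind `U_n(p, q)`: the fundamental solution of the recurrence
`x_{n+2} = p x_{n+1} - q x_n`, with initial values `0` and `1`. -/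
def lucasU (p q : R) : ℕ → R
  | 0 => 0
  | 1 => 1
  | n + 2 => p * lucasU p q (n + 1) - q * lucasU p q n

lemma lucasU_zero (p q : R) : lucasU p q 0 = 0 := by rw [lucasU]

lemma lucasU_one (p q : R) : lucasU p q 1 = 1 := by rw [lucasU]

lemma lucasU_add_two (p q : R) (n : ℕ) :
    lucasU p q (n + 2) = p * lucasU p q (n + 1) - q * lucasU p q n := by
  rw [lucasU]

lemma lucasU_quadratic_form_eq_pow (p q : R) (n : ℕ) :
    lucasU p q (n + 1) ^ 2 - p * lucasU p q (n + 1) * lucasU p q n + q * lucasU p q n ^ 2 =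
      q ^ n := by
  induction n with
  | zero => simp only [zero_add, lucasU_one, lucasU_zero]; ring
  | succ n ih =>
    rw [lucasU_add_two, pow_succ q, ← ih]
    ring

lemma eq_lucasU_smul_sub_of_recurrence {M : Type*} [AddCommGroup M] [Module R M] {p q : R}
    {x : ℕ → M} (hx : ∀ n, x (n + 2) = p • x (n + 1) - q • x n) (n : ℕ) :
    x (n + 1) = lucasU p q (n + 1) • x 1 - (q * lucasU p q n) • x 0 := by
  induction n using Nat.twoStepInduction with
  | zero => simp only [zero_add, lucasU_one, lucasU_zero, mul_zero, one_smul, zero_smul, sub_zero]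
  | one =>
    rw [hx 0, lucasU_add_two, zero_add, lucasU_one, lucasU_zero]
    module
  | more n ih ih_succ =>
    rw [hx (n + 1), ih_succ, ih, lucasU_add_two p q (n + 1), lucasU_add_two p q n]
    module

end LucasSequence

lemma lucasU_sq_le {p q : ℝ} (hpq : p ^ 2 < 4 * q) (n : ℕ) :
    lucasU p q n ^ 2 ≤ 4 / (4 * q - p ^ 2) * q ^ n := by
  rw [div_mul_eq_mul_div, le_div_iff₀ (sub_pos.2 hpq), ← lucasU_quadratic_form_eq_pow p q n]
  linarith [sq_nonneg (2 * lucasU p q (n + 1) - p * lucasU p q n)]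

lemma tendsto_lucasU_zero {p q : ℝ} (hpq : p ^ 2 < 4 * q) (hq : q < 1) :
    Tendsto (lucasU p q) atTop (nhds 0) := by
  have hq_nonneg : 0 ≤ q := by linarith [sq_nonneg p]
  have hbound : Tendsto (fun n ↦ √(4 / (4 * q - p ^ 2) * q ^ n)) atTop (nhds 0) := by
    simpa only [mul_zero, Real.sqrt_zero] using
      ((tendsto_pow_atTop_nhds_zero_of_lt_one hq_nonneg hq).const_mul (4 / (4 * q - p ^ 2))).sqrt
  exact squeeze_zero_norm (fun n ↦ Real.abs_le_sqrt (lucasU_sq_le hpq n)) hbound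

section TopologicalVectorSpace

variable {E : Type*} [AddCommGroup E] [Module ℝ E] [TopologicalSpace E]
  [IsTopologicalAddGroup E] [ContinuousSMul ℝ E]

lemma tendsto_zero_of_recurrence {p q : ℝ} (hpq : p ^ 2 < 4 * q) (hq : q < 1) {x : ℕ → E}
    (hx : ∀ n, x (n + 2) = p • x (n + 1) - q • x n) :
    Tendsto x atTop (nhds 0) := by
  have hU := tendsto_lucasU_zero hpq hq
  have hU_succ := (tendsto_add_atTop_iff_nat 1).2 hU
  rw [← tendsto_add_atTop_iff_nat 1]
  simpa only [← eq_lucasU_smul_sub_of_recurrence hx, mul_zero, zero_smul, sub_zero] using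
    (hU_succ.smul_const (x 1)).sub ((hU.const_mul q).smul_const (x 0))

theorem implicit_scheme_unconditionally_stable_general
    {ρ c Δt : ℝ} (hρ : 0 < ρ) (hc : 0 < c) (hΔt : 0 < Δt) {η : ℕ → E}
    (hrec : ∀ n : ℕ, 1 ≤ n →
      (ρ + Δt ^ 2 * c) • η (n + 1) - (2 * ρ) • η n + ρ • η (n - 1) = 0) :
    Tendsto η atTop (nhds 0) := by
  set a := ρ + Δt ^ 2 * c
  have hρa : ρ < a := lt_add_of_pos_right ρ (by positivity)
  have ha : 0 < a := hρ.trans hρa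
  have hq_pos : 0 < ρ / a := div_pos hρ ha
  have hq_lt_one : ρ / a < 1 := (div_lt_one ha).2 hρa
  have hdisc : (2 * (ρ / a)) ^ 2 < 4 * (ρ / a) := by
    nlinarith [mul_pos hq_pos (sub_pos.2 hq_lt_one)]
  refine tendsto_zero_of_recurrence hdisc hq_lt_one fun n ↦ ?_
  have hstep : a • η (n + 2) = (2 * ρ) • η (n + 1) - ρ • η n := by
    rw [← sub_eq_zero, ← sub_add]
    exact hrec (n + 1) (Nat.le_add_left 1 n)
  rw [(eq_inv_smul_iff₀ ha.ne').2 hstep]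
  module

end TopologicalVectorSpace

/-- Unconditional stability of the homogeneous implicit
marching scheme for the structure equation: every real sequence satisfying
`(ρ + Δt²c)·η_{n+1} − 2ρ·η_n + ρ·η_{n−1} = 0` for all `n ≥ 1` converges
to `0`, with no restriction relating `Δt`, `ρ` and `c`. -/
theorem implicit_scheme_unconditionally_stable
    (ρ c Δt : ℝ) (hρ : 0 < ρ) (hc : 0 < c) (hΔt : 0 < Δt)
    (η : ℕ → ℝ)
    (hrec : ∀ n : ℕ, 1 ≤ n →
      (ρ + Δt ^ 2 * c) * η (n + 1) - 2 * ρ * η n + ρ * η (n - 1) = 0) :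
    Tendsto η atTop (nhds 0) :=
  implicit_scheme_unconditionally_stable_general hρ hc hΔt hrec
end

section
/- Let ρ > 0, c > 0, Δt > 0 and M ≥ 0, and let (f_n)_{n≥1} be a real sequence with |f_n| ≤ M for all n. Then every real sequence (η_n)_{n≥0} satisfying ρ·(η_{n+1} − 2η_n + η_{n−1})/Δt² + c·η_{n+1} = f_{n+1} for all n ≥ 1 is bounded; i.e., there exists K (depending on ρ, c, Δt, M, η_0, η_1) with |η_n| ≤ K for all n. -/
/-!
With `ω ^ 2 = c * Δt ^ 2 / ρ`, the unforced scheme reads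
`(1 + ω ^ 2) η (n + 2) - 2 η (n + 1) + η n = 0`. In terms of the forward shift `S` its left-hand
side is `(w S - 1) (conj w S - 1) η`, where `w = 1 + i ω`. Since `‖w‖ > 1` for every time step, each
factor can be inverted on bounded sequences: if `w S u - u` is bounded, then so is `u`.
-/

section NormedField

variable {𝕜 E : Type*} [NormedField 𝕜] [SeminormedAddCommGroup E] [NormedSpace 𝕜 E]

theorem exists_norm_le_of_norm_smul_succ_sub_le {w : 𝕜} (hw : 1 < ‖w‖) {u : ℕ → E} {B : ℝ}
    (hu : ∀ n, ‖w • u (n + 1) - u n‖ ≤ B) : ∃ K : ℝ, ∀ n, ‖u n‖ ≤ K := by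
  set K := max ‖u 0‖ (B / (‖w‖ - 1))
  have hBK : B ≤ K * (‖w‖ - 1) := (div_le_iff₀ (sub_pos.2 hw)).1 (le_max_right _ _)
  refine ⟨K, fun n => ?_⟩
  induction n with
  | zero => exact le_max_left _ _
  | succ n ih =>
    have hmul : ‖w‖ * ‖u (n + 1)‖ ≤ ‖w‖ * K :=
      calc ‖w‖ * ‖u (n + 1)‖ = ‖w • u (n + 1) - u n + u n‖ := by rw [sub_add_cancel, norm_smul]
        _ ≤ B + K := norm_add_le_of_le (hu n) ih
        _ ≤ ‖w‖ * K := by linarith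
    exact le_of_mul_le_mul_left hmul (zero_lt_one.trans hw)

theorem exists_norm_le_of_norm_mul_smul_sub_add_smul_add_le {w z : 𝕜} (hw : 1 < ‖w‖)
    (hz : 1 < ‖z‖) {u : ℕ → E} {B : ℝ}
    (hu : ∀ n, ‖(w * z) • u (n + 2) - (w + z) • u (n + 1) + u n‖ ≤ B) :
    ∃ K : ℝ, ∀ n, ‖u n‖ ≤ K := by
  have hfactor (n : ℕ) : w • (z • u (n + 2) - u (n + 1)) - (z • u (n + 1) - u n) =
      (w * z) • u (n + 2) - (w + z) • u (n + 1) + u n := by module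
  obtain ⟨C, hC⟩ := exists_norm_le_of_norm_smul_succ_sub_le hw
    (u := fun n => z • u (n + 1) - u n) fun n => (hfactor n).symm ▸ hu n
  exact exists_norm_le_of_norm_smul_succ_sub_le hz hC

end NormedField

section Real

variable {E : Type*} [SeminormedAddCommGroup E] [NormedSpace ℝ E]

variable (E) in
/-- The isometric embedding of a real normed space into a complex one given by evaluating
functionals. It makes complex roots of real recurrences available over `E`, taking
`StrongDual ℝ E →L[ℝ] ℂ` as a substitute for a normed complexification. -/
noncomputable def dualComplexEmbedding :
    E →ₗᵢ[ℝ] (StrongDual ℝ E →L[ℝ] ℂ) :=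
  Complex.ofRealLI.postcomp.comp (NormedSpace.inclusionInDoubleDualLi ℝ)

theorem exists_norm_le_of_norm_normSq_smul_sub_re_smul_add_le {w : ℂ} (hw : 1 < ‖w‖)
    {u : ℕ → E} {B : ℝ}
    (hu : ∀ n, ‖Complex.normSq w • u (n + 2) - (2 * w.re) • u (n + 1) + u n‖ ≤ B) :
    ∃ K : ℝ, ∀ n, ‖u n‖ ≤ K := by
  let J := dualComplexEmbedding E
  have hmap (n : ℕ) : (w * starRingEnd ℂ w) • J (u (n + 2)) -
      (w + starRingEnd ℂ w) • J (u (n + 1)) + J (u n) =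
      J (Complex.normSq w • u (n + 2) - (2 * w.re) • u (n + 1) + u n) := by
    simp only [Complex.mul_conj, Complex.add_conj, J.map_add, J.map_sub, J.map_smul,
      ← algebraMap_smul ℂ (_ : ℝ) (J _), Complex.coe_algebraMap]
  obtain ⟨K, hK⟩ := exists_norm_le_of_norm_mul_smul_sub_add_smul_add_le hw
    (hw.trans_eq (Complex.norm_conj w).symm) (u := fun n => J (u n)) (B := B) fun n => by
      rw [hmap, J.norm_map]
      exact hu n
  exact ⟨K, fun n => (J.norm_map (u n)).symm.trans_le (hK n)⟩

theorem exists_norm_le_of_norm_one_add_sq_smul_sub_two_smul_add_le {ω : ℝ} (hω : ω ≠ 0)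
    {u : ℕ → E} {B : ℝ}
    (hu : ∀ n, ‖(1 + ω ^ 2) • u (n + 2) - (2 : ℝ) • u (n + 1) + u n‖ ≤ B) :
    ∃ K : ℝ, ∀ n, ‖u n‖ ≤ K := by
  have hnormSq : Complex.normSq ⟨1, ω⟩ = 1 + ω ^ 2 := by rw [Complex.normSq_mk]; ring
  have hnorm : 1 < ‖(⟨1, ω⟩ : ℂ)‖ := by
    rw [← one_lt_sq_iff₀ (norm_nonneg _), Complex.sq_norm, hnormSq]
    exact lt_add_of_pos_right 1 (sq_pos_of_ne_zero hω)
  refine exists_norm_le_of_norm_normSq_smul_sub_re_smul_add_le hnorm (B := B) fun n => ?_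
  simpa only [hnormSq, mul_one] using hu n

theorem one_add_smul_sub_two_smul_add_eq_of_implicit_step {ρ c Δt : ℝ} (hρ : ρ ≠ 0) (hΔt : Δt ≠ 0)
    {x y z g : E} (h : (ρ / Δt ^ 2) • (z - (2 : ℝ) • y + x) + c • z = g) :
    (1 + c * Δt ^ 2 / ρ) • z - (2 : ℝ) • y + x = (Δt ^ 2 / ρ) • g := by
  rw [← h]
  match_scalars <;> field_simp

theorem implicit_scheme_bounded_forcing_stable_general
    (ρ c Δt M : ℝ) (hρ : 0 < ρ) (hc : 0 < c) (hΔt : 0 < Δt)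
    (f : ℕ → E) (hf : ∀ n : ℕ, 1 ≤ n → ‖f n‖ ≤ M)
    (η : ℕ → E)
    (hrec : ∀ n : ℕ, 1 ≤ n →
      (ρ / Δt ^ 2) • (η (n + 1) - (2 : ℝ) • η n + η (n - 1)) + c • η (n + 1) = f (n + 1)) :
    ∃ K : ℝ, ∀ n : ℕ, ‖η n‖ ≤ K := by
  have hpos : 0 < c * Δt ^ 2 / ρ := by positivity
  refine exists_norm_le_of_norm_one_add_sq_smul_sub_two_smul_add_le (Real.sqrt_pos.2 hpos).ne'
    (B := Δt ^ 2 / ρ * M) fun n => ?_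
  have hstep := one_add_smul_sub_two_smul_add_eq_of_implicit_step hρ.ne' hΔt.ne'
    (hrec (n + 1) n.succ_pos)
  rw [Nat.add_sub_cancel] at hstep
  rw [Real.sq_sqrt hpos.le, hstep, norm_smul_of_nonneg (by positivity)]
  gcongr
  exact hf _ (Nat.le_add_left _ _)

end Real

/-- Unconditional stability of the implicit marching scheme
for the structure sub-problem with uniformly bounded forcing: every real
sequence satisfying
`ρ·(η_{n+1} − 2η_n + η_{n−1})/Δt² + c·η_{n+1} = f_{n+1}` for all `n ≥ 1`,
with `|f_n| ≤ M`, is bounded. -/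
theorem implicit_scheme_bounded_forcing_stable
    (ρ c Δt M : ℝ) (hρ : 0 < ρ) (hc : 0 < c) (hΔt : 0 < Δt) (hM : 0 ≤ M)
    (f : ℕ → ℝ) (hf : ∀ n : ℕ, 1 ≤ n → |f n| ≤ M)
    (η : ℕ → ℝ)
    (hrec : ∀ n : ℕ, 1 ≤ n →
      ρ * (η (n + 1) - 2 * η n + η (n - 1)) / Δt ^ 2 + c * η (n + 1) = f (n + 1)) :
    ∃ K : ℝ, ∀ n : ℕ, |η n| ≤ K := by
  refine implicit_scheme_bounded_forcing_stable_general ρ c Δt M hρ hc hΔt f hf η fun n hn => ?_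
  simpa only [smul_eq_mul, div_mul_eq_mul_div] using hrec n hn
end
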